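/- arXiv:1801.04466 — 7 statements merged into one kernel-verified Lean document; each statement's English description precedes it below -/
import Mathlib

section
/- Let n ≥ k ≥ 1, let Φ be an n×k real matrix with orthonormal columns (Φᵀ Φ = I_k), and let V be an invertible k×k real matrix. For each k-element subset S of {1,…,n} let G_S = (Φ_S V)ᵀ (Φ_S V), where Φ_S is the submatrix of rows of Φ indexed by S. Let N = C(n,k) be the number of such subsets. Then the geometric mean of the determinants satisfies (∏_S det G_S)^{1/N} ≤ det(Vᵀ V) / N. -/
open Matrix

/-- The `k × k` submatrix of `Φ` formed by the rows indexed by the `k`-element subset `S`. -/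
def rowsSub {n k : ℕ} (Φ : Matrix (Fin n) (Fin k) ℝ)
    (S : {s : Finset (Fin n) // s.card = k}) : Matrix (Fin k) (Fin k) ℝ :=
  fun i j => Φ ((S.1.orderIsoOfFin S.2 i : Fin n)) j

lemma det_gram_expand {n k : ℕ} (Φ : Matrix (Fin n) (Fin k) ℝ) :
    (Φᵀ * Φ).det = ∑ f : Fin k → Fin n, (∏ i, Φ (f i) i) * (Φ.submatrix f id).det := by
  have h : (Φᵀ * Φ) = fun i => ∑ a : Fin n, Φ a i • Φ a := by
    ext i j
    simp [Matrix.mul_apply, Finset.sum_apply]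
  have h2 := (Matrix.detRowAlternating (n := Fin k) (R := ℝ)).toMultilinearMap.map_sum
    (fun (i : Fin k) (a : Fin n) => Φ a i • Φ a)
  have h3 : (Φᵀ * Φ).det = (Matrix.detRowAlternating (n := Fin k) (R := ℝ)).toMultilinearMap
      (fun i => ∑ a : Fin n, Φ a i • Φ a) := by
    rw [h]; rfl
  rw [h3, h2]
  refine Finset.sum_congr rfl fun f _ => ?_
  rw [MultilinearMap.map_smul_univ, smul_eq_mul]
  rfl

lemma cauchy_binet_gram {n k : ℕ} (Φ : Matrix (Fin n) (Fin k) ℝ) :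
    ∑ S : {s : Finset (Fin n) // s.card = k}, (rowsSub Φ S).det ^ 2 = (Φᵀ * Φ).det := by
  rw [det_gram_expand]
  have h1 : ∀ S : {s : Finset (Fin n) // s.card = k}, (rowsSub Φ S).det ^ 2 =
      ∑ σ : Equiv.Perm (Fin k), (Equiv.Perm.sign σ : ℝ) * (∏ i, rowsSub Φ S (σ i) i) *
        (rowsSub Φ S).det := by
    intro S
    rw [← Finset.sum_mul, pow_two]
    congr 1
    rw [Matrix.det_apply']
  simp_rw [h1]
  rw [← Fintype.sum_prod_type']
  refine Finset.sum_of_injOn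
    (fun p : {s : Finset (Fin n) // s.card = k} × Equiv.Perm (Fin k) =>
      fun i => ((p.1.1.orderIsoOfFin p.1.2 (p.2 i) : Fin n))) ?_ ?_ ?_ ?_
  · rintro ⟨⟨S, hS⟩, σ⟩ - ⟨⟨T, hT⟩, τ⟩ - h
    have hfun : ∀ i, (S.orderIsoOfFin hS (σ i) : Fin n) = T.orderIsoOfFin hT (τ i) :=
      fun i => congrFun h i
    have hST : S = T := by
      refine Finset.eq_of_subset_of_card_le ?_ (by rw [hS, hT])
      intro x hx
      have := hfun (σ.symm ((S.orderIsoOfFin hS).symm ⟨x, hx⟩))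
      rw [Equiv.apply_symm_apply, OrderIso.apply_symm_apply] at this
      have h4 : x = _ := this
      rw [h4]
      exact Subtype.property _
    subst hST
    have : σ = τ := by
      ext i
      have := (S.orderIsoOfFin hS).injective (Subtype.ext (hfun i))
      rw [this]
    rw [this]
  · intro p _
    simp
  · intro f _ hf
    by_cases hinj : Function.Injective f
    · exfalso
      apply hf
      have hc : (Finset.univ.image f).card = k := by
        rw [Finset.card_image_of_injective _ hinj]; simp
      have hm : ∀ i, f i ∈ Finset.univ.image f := fun i => by simp
      have hb : Function.Injective
          (fun i => ((Finset.univ.image f).orderIsoOfFin hc).symm ⟨f i, hm i⟩) := by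
        intro i j hij
        have := ((Finset.univ.image f).orderIsoOfFin hc).symm.injective hij
        exact hinj (congrArg Subtype.val this)
      refine ⟨⟨⟨Finset.univ.image f, hc⟩,
        Equiv.ofBijective _ (Finite.injective_iff_bijective.mp hb)⟩, by simp, ?_⟩
      funext i
      simp only [Equiv.ofBijective_apply, OrderIso.apply_symm_apply]
    · simp only [Function.Injective, not_forall] at hinj
      obtain ⟨i, j, hij, hne⟩ := hinj
      rw [Matrix.det_zero_of_row_eq hne, mul_zero]
      funext l
      simp [hij]
  · rintro ⟨S, σ⟩ _
    have : Φ.submatrix (fun i => ((S.1.orderIsoOfFin S.2 (σ i) : Fin n))) id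
        = (rowsSub Φ S).submatrix σ id := rfl
    simp only [this, Matrix.det_permute]
    simp only [rowsSub]
    ring

/-- Determinant bound: the geometric mean of the Gram determinants of the child
lattices is at most `det (Vᵀ V) / C(n,k)`. -/
theorem geom_mean_det_gram_le (n k : ℕ) (hk : 1 ≤ k) (hkn : k ≤ n)
    (Φ : Matrix (Fin n) (Fin k) ℝ) (hΦ : Φᵀ * Φ = 1)
    (V : Matrix (Fin k) (Fin k) ℝ) (hV : IsUnit V.det) :
    (∏ S : {s : Finset (Fin n) // s.card = k},
        ((rowsSub Φ S * V)ᵀ * (rowsSub Φ S * V)).det) ^ ((1 : ℝ) / (n.choose k : ℝ))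
      ≤ (Vᵀ * V).det / (n.choose k : ℝ) := by
  have hg : ∀ S : {s : Finset (Fin n) // s.card = k},
      ((rowsSub Φ S * V)ᵀ * (rowsSub Φ S * V)).det = (rowsSub Φ S).det ^ 2 * V.det ^ 2 := by
    intro S
    rw [Matrix.det_mul, Matrix.det_transpose, Matrix.det_mul]
    ring
  have hN : (0 : ℝ) < (n.choose k : ℝ) := by exact_mod_cast Nat.choose_pos hkn
  have hcard : (∑ _S : {s : Finset (Fin n) // s.card = k}, (1 : ℝ)) = (n.choose k : ℝ) := by
    simp
  have hsum : ∑ S : {s : Finset (Fin n) // s.card = k},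
      ((rowsSub Φ S * V)ᵀ * (rowsSub Φ S * V)).det = (Vᵀ * V).det := by
    simp_rw [hg]
    rw [← Finset.sum_mul, cauchy_binet_gram, hΦ, Matrix.det_one, Matrix.det_mul,
      Matrix.det_transpose]
    ring
  have := Real.geom_mean_le_arith_mean Finset.univ (fun _ => (1 : ℝ))
    (fun S : {s : Finset (Fin n) // s.card = k} =>
      ((rowsSub Φ S * V)ᵀ * (rowsSub Φ S * V)).det)
    (fun _ _ => zero_le_one) (by rw [hcard]; exact hN)
    (fun S _ => by rw [hg]; positivity)
  simp only [Real.rpow_one, one_mul] at this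
  rw [hcard, hsum] at this
  rw [one_div]
  exact this
end

section
/- Let n ≥ k ≥ 1, let Φ be an n×k real matrix with orthonormal columns (Φᵀ Φ = I_k), and let V be an invertible k×k real matrix. For each k-element subset S of {1,…,n}, let r_S² = inf{ ‖Φ_S V u‖² : u ∈ ℤ^k, u ≠ 0 } and let r_V² = inf{ ‖V u‖² : u ∈ ℤ^k, u ≠ 0 }. Then the average of r_S² over all C(n,k) subsets S satisfies (1/C(n,k)) ∑_S r_S² ≤ (k/n) · r_V². -/
open Matrix

/-- Squared Euclidean norm of a vector in `ℝ^k`. -/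
def sqnorm {k : ℕ} (x : Fin k → ℝ) : ℝ := ∑ i, x i ^ 2

/-- The squared length of the shortest nonzero vector of the lattice `M ℤ^k`. -/
noncomputable def minSq {k : ℕ} (M : Matrix (Fin k) (Fin k) ℝ) : ℝ :=
  sInf {t : ℝ | ∃ u : Fin k → ℤ, u ≠ 0 ∧ t = sqnorm (M.mulVec fun j => (u j : ℝ))}

lemma tb_count (n k : ℕ) (i : Fin (n+1)) :
    ((Finset.univ : Finset (Finset (Fin (n+1)))).filter (fun s => s.card = k+1 ∧ i ∈ s)).card = n.choose k := by
  have h : (Finset.univ : Finset (Finset (Fin (n+1)))).filter (fun s => s.card = k+1 ∧ i ∈ s)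
      = (Finset.powersetCard k (Finset.univ.erase i)).image (insert i) := by
    ext s
    simp only [Finset.mem_filter, Finset.mem_univ, true_and, Finset.mem_image, Finset.mem_powersetCard]
    constructor
    · rintro ⟨h1, h2⟩
      refine ⟨s.erase i, ⟨Finset.erase_subset_erase _ (Finset.subset_univ _), ?_⟩, Finset.insert_erase h2⟩
      rw [Finset.card_erase_of_mem h2, h1]; rfl
    · rintro ⟨t, ⟨h1, h2⟩, rfl⟩
      have hi : i ∉ t := fun h => by simpa using h1 h
      exact ⟨by rw [Finset.card_insert_of_notMem hi, h2], Finset.mem_insert_self _ _⟩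
  rw [h, Finset.card_image_of_injOn, Finset.card_powersetCard, Finset.card_erase_of_mem (Finset.mem_univ _)]
  · simp
  · intro s hs t ht hst
    simp only [Finset.mem_coe, Finset.mem_powersetCard] at hs ht
    have h1 : i ∉ s := fun h => by simpa using hs.1 h
    have h2 : i ∉ t := fun h => by simpa using ht.1 h
    rw [← Finset.erase_insert h1, ← Finset.erase_insert h2]
    exact congrArg (fun z => Finset.erase z i) hst

lemma tb_sqnorm_rows {n k : ℕ} (Φ : Matrix (Fin n) (Fin k) ℝ)
    (S : {s : Finset (Fin n) // s.card = k}) (x : Fin k → ℝ) :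
    sqnorm ((rowsSub Φ S).mulVec x) = ∑ i ∈ S.1, (Φ.mulVec x i) ^ 2 := by
  rw [← Finset.sum_coe_sort]
  exact Fintype.sum_equiv (S.1.orderIsoOfFin S.2).toEquiv _ _ (fun i => rfl)

lemma tb_sum (n k : ℕ) (f : Fin (n+1) → ℝ) :
    ∑ S : {s : Finset (Fin (n+1)) // s.card = k+1}, ∑ i ∈ S.1, f i = (n.choose k : ℝ) * ∑ i, f i := by
  have h1 : ∑ S : {s : Finset (Fin (n+1)) // s.card = k+1}, ∑ i ∈ S.1, f i
      = ∑ s ∈ (Finset.univ : Finset (Finset (Fin (n+1)))).filter (fun s => s.card = k+1), ∑ i ∈ s, f i := by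
    symm
    exact Finset.sum_subtype _ (by simp) (fun s => ∑ i ∈ s, f i)
  rw [h1, Finset.mul_sum]
  have h2 : ∀ s : Finset (Fin (n+1)), ∑ i ∈ s, f i = ∑ i, if i ∈ s then f i else 0 := by
    intro s; simp
  simp_rw [h2]
  rw [Finset.sum_comm]
  refine Finset.sum_congr rfl fun i _ => ?_
  rw [← Finset.sum_filter, Finset.filter_filter, Finset.sum_const, tb_count, nsmul_eq_mul]

lemma tb_isometry {n k : ℕ} (Φ : Matrix (Fin n) (Fin k) ℝ) (hΦ : Φᵀ * Φ = 1) (x : Fin k → ℝ) :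
    ∑ i, (Φ.mulVec x i) ^ 2 = sqnorm x := by
  have h : Φ.mulVec x ⬝ᵥ Φ.mulVec x = x ⬝ᵥ x := by
    rw [Matrix.dotProduct_mulVec, ← Matrix.mulVec_transpose, Matrix.mulVec_mulVec, hΦ, Matrix.one_mulVec]
  simpa [dotProduct, sqnorm, pow_two] using h

/-- Trace bound: the average over all `k`-subsets `S` of the squared shortest
vector of the child lattice `Φ_S V ℤ^k` is at most `(k/n)` times the squared
shortest vector of the mother lattice `V ℤ^k`. -/
theorem avg_minSq_le_trace_bound (n k : ℕ) (hk : 1 ≤ k) (hkn : k ≤ n)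
    (Φ : Matrix (Fin n) (Fin k) ℝ) (hΦ : Φᵀ * Φ = 1)
    (V : Matrix (Fin k) (Fin k) ℝ) (hV : IsUnit V.det) :
    (1 / (n.choose k : ℝ)) *
        ∑ S : {s : Finset (Fin n) // s.card = k}, minSq (rowsSub Φ S * V)
      ≤ ((k : ℝ) / (n : ℝ)) * minSq V := by
  obtain ⟨k, rfl⟩ : ∃ m, k = m + 1 := ⟨k - 1, by omega⟩
  obtain ⟨n, rfl⟩ : ∃ m, n = m + 1 := ⟨n - 1, by omega⟩
  have hc : (0 : ℝ) < ((n+1).choose (k+1) : ℕ) := by exact_mod_cast Nat.choose_pos hkn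
  have hn : (0 : ℝ) < ((n+1 : ℕ) : ℝ) := by positivity
  have hk' : (0 : ℝ) < ((k+1 : ℕ) : ℝ) := by positivity
  have hid : ((n+1 : ℕ) : ℝ) * (n.choose k : ℝ) = ((n+1).choose (k+1) : ℕ) * ((k+1 : ℕ) : ℝ) := by
    exact_mod_cast Nat.add_one_mul_choose_eq n k
  have hbdd : ∀ M : Matrix (Fin (k+1)) (Fin (k+1)) ℝ, BddBelow
      {t : ℝ | ∃ u : Fin (k+1) → ℤ, u ≠ 0 ∧ t = sqnorm (M.mulVec fun j => (u j : ℝ))} := by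
    intro M
    refine ⟨0, ?_⟩
    rintro t ⟨u, -, rfl⟩
    exact Finset.sum_nonneg fun i _ => sq_nonneg _
  rw [← div_le_iff₀' (by positivity)]
  refine le_csInf ⟨_, (fun _ => 1), fun h => by simpa using congrFun h 0, rfl⟩ ?_
  rintro t ⟨u, hu, rfl⟩
  rw [div_le_iff₀' (by positivity)]
  have key : ∑ S : {s : Finset (Fin (n+1)) // s.card = k+1}, minSq (rowsSub Φ S * V)
      ≤ (n.choose k : ℝ) * sqnorm (V.mulVec fun j => (u j : ℝ)) := by
    rw [← tb_isometry Φ hΦ, ← tb_sum]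
    refine Finset.sum_le_sum fun S _ => ?_
    rw [← tb_sqnorm_rows, Matrix.mulVec_mulVec]
    exact csInf_le (hbdd _) ⟨u, hu, rfl⟩
  calc _ ≤ (1 / ((n+1).choose (k+1) : ℕ) : ℝ) *
        ((n.choose k : ℝ) * sqnorm (V.mulVec fun j => (u j : ℝ))) := by gcongr
    _ = _ := by
      rw [← mul_assoc]
      congr 1
      rw [one_div, inv_mul_eq_div, div_eq_div_iff hc.ne' hn.ne']
      linarith
end

section
/- Let n ≥ k ≥ 1, let Φ be an n×k real matrix with orthonormal columns (Φᵀ Φ = I_k), and let V be an invertible k×k real matrix. Suppose there exists a nonzero u ∈ ℤ^k such that ‖V u‖² = inf{ ‖V w‖² : w ∈ ℤ^k, w ≠ 0 } and, for every k-element subset S of {1,…,n}, ‖Φ_S V u‖² = inf{ ‖Φ_S V w‖² : w ∈ ℤ^k, w ≠ 0 }. Then (1/C(n,k)) ∑_S inf{ ‖Φ_S V w‖² : w ∈ ℤ^k, w ≠ 0 } = (k/n) · inf{ ‖V w‖² : w ∈ ℤ^k, w ≠ 0 }. -/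
open Matrix

theorem card_aux {n : ℕ} (k : ℕ) (i : Fin (n+1)) :
    ((Finset.powersetCard (k+1) (Finset.univ : Finset (Fin (n+1)))).filter (fun s => i ∈ s)).card
      = n.choose k := by
  have h : ((Finset.powersetCard (k+1) (Finset.univ : Finset (Fin (n+1)))).filter (fun s => i ∈ s))
      = (Finset.powersetCard k (Finset.univ.erase i)).image (insert i) := by
    ext s
    simp only [Finset.mem_filter, Finset.mem_powersetCard, Finset.mem_image]
    constructor
    · rintro ⟨⟨_, hs⟩, hi⟩
      refine ⟨s.erase i, ⟨Finset.erase_subset_erase _ (Finset.subset_univ _), ?_⟩,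
        Finset.insert_erase hi⟩
      rw [Finset.card_erase_of_mem hi, hs]; rfl
    · rintro ⟨t, ⟨ht, hc⟩, rfl⟩
      have hi : i ∉ t := fun h => by simpa using ht h
      refine ⟨⟨Finset.subset_univ _, ?_⟩, Finset.mem_insert_self _ _⟩
      rw [Finset.card_insert_of_notMem hi, hc]
  rw [h, Finset.card_image_of_injOn, Finset.card_powersetCard,
    Finset.card_erase_of_mem (Finset.mem_univ _)]
  · simp
  · intro s hs t ht hst
    simp only [Finset.mem_coe,
      Finset.mem_powersetCard] at hs ht
    have h1 : i ∉ s := fun h => by simpa using hs.1 h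
    have h2 : i ∉ t := fun h => by simpa using ht.1 h
    have := congrArg (fun x => Finset.erase x i) hst
    simpa [Finset.erase_insert h1, Finset.erase_insert h2] using this

theorem sum_aux {n : ℕ} (k : ℕ) (f : Fin (n+1) → ℝ) :
    ∑ S : {s : Finset (Fin (n+1)) // s.card = k+1}, ∑ i ∈ S.1, f i
      = (n.choose k : ℝ) * ∑ i, f i := by
  have h1 : ∑ S : {s : Finset (Fin (n+1)) // s.card = k+1}, ∑ i ∈ S.1, f i
      = ∑ s ∈ Finset.powersetCard (k+1) (Finset.univ : Finset (Fin (n+1))), ∑ i ∈ s, f i := by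
    symm
    apply Finset.sum_subtype
    intro x
    simp [Finset.mem_powersetCard]
  rw [h1]
  have h2 : ∀ s : Finset (Fin (n+1)), ∑ i ∈ s, f i = ∑ i, if i ∈ s then f i else 0 := by
    intro s; simp
  simp_rw [h2]
  rw [Finset.sum_comm, Finset.mul_sum]
  refine Finset.sum_congr rfl fun i _ => ?_
  rw [← Finset.sum_filter, Finset.sum_const, card_aux, nsmul_eq_mul, if_pos (Finset.mem_univ i)]

theorem sqnorm_rows {n k : ℕ} (Φ : Matrix (Fin n) (Fin k) ℝ)
    (S : {s : Finset (Fin n) // s.card = k}) (y : Fin k → ℝ) :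
    sqnorm ((rowsSub Φ S).mulVec y) = ∑ i ∈ S.1, (Φ.mulVec y i) ^ 2 := by
  rw [← Finset.sum_coe_sort S.1]
  exact Equiv.sum_comp (S.1.orderIsoOfFin S.2).toEquiv
    (fun i : S.1 => (Φ.mulVec y (i : Fin n)) ^ 2)

theorem sqnorm_iso {n k : ℕ} (Φ : Matrix (Fin n) (Fin k) ℝ) (hΦ : Φᵀ * Φ = 1)
    (y : Fin k → ℝ) : ∑ i, (Φ.mulVec y i) ^ 2 = sqnorm y := by
  have h : (Φ.mulVec y) ⬝ᵥ (Φ.mulVec y) = y ⬝ᵥ y := by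
    rw [Matrix.dotProduct_mulVec, Matrix.vecMul_mulVec, hΦ]
    simp
  simpa [dotProduct, sqnorm, pow_two] using h

/-- Equality condition of the trace bound: if one common nonzero integer vector `u`
realizes the shortest vector of the mother lattice `V ℤ^k` and of every child lattice
`Φ_S V ℤ^k`, then the average squared shortest child vector equals `(k/n)` times the
squared shortest vector of the mother lattice. -/
theorem avg_minSq_eq_trace_bound (n k : ℕ) (hk : 1 ≤ k) (hkn : k ≤ n)
    (Φ : Matrix (Fin n) (Fin k) ℝ) (hΦ : Φᵀ * Φ = 1)
    (V : Matrix (Fin k) (Fin k) ℝ) (hV : IsUnit V.det)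
    (hshort : ∃ u : Fin k → ℤ, u ≠ 0 ∧
      sqnorm (V.mulVec fun j => (u j : ℝ)) = minSq V ∧
      ∀ S : {s : Finset (Fin n) // s.card = k},
        sqnorm ((rowsSub Φ S * V).mulVec fun j => (u j : ℝ)) = minSq (rowsSub Φ S * V)) :
    (1 / (n.choose k : ℝ)) *
        ∑ S : {s : Finset (Fin n) // s.card = k}, minSq (rowsSub Φ S * V)
      = ((k : ℝ) / (n : ℝ)) * minSq V := by
  obtain ⟨u, -, hu, hS⟩ := hshort
  obtain ⟨k, rfl⟩ : ∃ m, k = m + 1 := ⟨k - 1, by omega⟩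
  obtain ⟨n, rfl⟩ : ∃ m, n = m + 1 := ⟨n - 1, by omega⟩
  rw [← hu]
  simp_rw [← hS, ← Matrix.mulVec_mulVec, sqnorm_rows]
  rw [sum_aux, sqnorm_iso Φ hΦ]
  have hc : ((n+1).choose (k+1) : ℝ) ≠ 0 := by
    exact_mod_cast (Nat.choose_pos hkn).ne'
  have hid : ((n : ℝ) + 1) * (n.choose k : ℝ) = ((n+1).choose (k+1) : ℝ) * ((k : ℝ) + 1) := by
    exact_mod_cast Nat.add_one_mul_choose_eq n k
  have hn : ((n : ℝ) + 1) ≠ 0 := by positivity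
  push_cast
  rw [← mul_assoc]
  congr 1
  field_simp
  linarith
end

section
/- Let Φ be a 4×2 real matrix with orthonormal columns (Φᵀ Φ = I₂). For a 2-element subset S of {1,2,3,4}, let Φ_S denote the 2×2 matrix formed by the rows of Φ indexed by S. Then there exists a 2-element subset S of {1,2,3,4} and a nonzero vector u ∈ ℤ² such that ‖Φ_S u‖² ≤ 1/3. -/
open Matrix

/-- If `X ^ 2 ≤ A * B` and everything is nonnegative then `X ≤ a * b`. -/
lemma le_prod_of_sq {a b X : ℝ} (ha : 0 ≤ a) (hb : 0 ≤ b) (h : X ^ 2 ≤ a ^ 2 * b ^ 2) :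
    X ≤ a * b := by
  have h1 : X ^ 2 ≤ (a * b) ^ 2 := by rw [mul_pow]; exact h
  exact le_of_abs_le (abs_le_of_sq_le_sq h1 (mul_nonneg ha hb))

lemma bad_case {a1 a2 a3 a4 b1 b2 b3 b4 : ℝ}
    (ha1 : 0 ≤ a1) (ha2 : 0 ≤ a2) (ha3 : 0 ≤ a3) (ha4 : 0 ≤ a4)
    (hb1 : 0 ≤ b1) (hb2 : 0 ≤ b2) (hb3 : 0 ≤ b3) (hb4 : 0 ≤ b4)
    (hA : a1 ^ 2 + a2 ^ 2 + a3 ^ 2 + a4 ^ 2 = 1)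
    (hA23 : 1 / 3 < a2 ^ 2 + a3 ^ 2) (hA24 : 1 / 3 < a2 ^ 2 + a4 ^ 2)
    (hA34 : 1 / 3 < a3 ^ 2 + a4 ^ 2)
    (hB12 : 1 / 3 < b1 ^ 2 + b2 ^ 2) (hB13 : 1 / 3 < b1 ^ 2 + b3 ^ 2)
    (hB14 : 1 / 3 < b1 ^ 2 + b4 ^ 2)
    (h : 1 / 3 < a1 ^ 2 - b1 ^ 2) :
    2 / 3 ≤ a1 * b1 + a2 * b2 + a3 * b3 + a4 * b4 := by
  obtain ⟨e, he⟩ : ∃ e, e = a1 ^ 2 - 1 / 3 := ⟨_, rfl⟩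
  obtain ⟨β, hβ⟩ : ∃ β, β = b1 ^ 2 := ⟨_, rfl⟩
  have hβ0 : 0 ≤ β := by rw [hβ]; positivity
  have hbe : β < e := by linarith
  have hel : e < 1 / 6 := by linarith
  obtain ⟨k, hk⟩ : ∃ k, k = (2 / 3 - β) / (2 / 3 - e) := ⟨_, rfl⟩
  have hkm : k * (2 / 3 - e) = 2 / 3 - β := by
    rw [hk]; exact div_mul_cancel₀ _ (by linarith)
  have hk2 : (1 / 3 - e) * k ^ 2 ≤ 1 / 3 - β := by
    have hpos : 0 < 2 / 3 - e := by linarith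
    rw [hk, div_pow, ← mul_div_assoc, div_le_iff₀ (pow_pos hpos 2)]
    have : (1 / 3 - β) * (2 / 3 - e) ^ 2 - (1 / 3 - e) * (2 / 3 - β) ^ 2
        = (e - β) * ((e + β) / 3 - e * β) := by ring
    have h2 : 0 ≤ (e - β) * ((e + β) / 3 - e * β) :=
      mul_nonneg (by linarith) (by linarith [mul_le_mul_of_nonneg_left hel.le hβ0])
    linarith
  have key : ∀ x y : ℝ, 0 ≤ x → 0 ≤ y → x ^ 2 ≤ 1 / 3 - e → 1 / 3 - β ≤ y ^ 2 →
      x ^ 2 * k ≤ x * y := by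
    intro x y hx hy h1 h2
    apply le_prod_of_sq hx hy
    have h3 : x ^ 2 * k ^ 2 ≤ y ^ 2 := by
      linarith [mul_le_mul_of_nonneg_right h1 (sq_nonneg k)]
    have h4 := mul_le_mul_of_nonneg_left h3 (sq_nonneg x)
    linarith [mul_pow (x ^ 2) k 2]
  have k2 := key a2 b2 ha2 hb2 (by linarith) (by linarith)
  have k3 := key a3 b3 ha3 hb3 (by linarith) (by linarith)
  have k4 := key a4 b4 ha4 hb4 (by linarith) (by linarith)
  have k1 : β ≤ a1 * b1 := by
    apply le_prod_of_sq ha1 hb1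
    rw [← hβ, sq]
    exact mul_le_mul_of_nonneg_right (by linarith) hβ0
  have : (a2 ^ 2 + a3 ^ 2 + a4 ^ 2) * k = 2 / 3 - β := by
    rw [← hkm]
    have : a2 ^ 2 + a3 ^ 2 + a4 ^ 2 = 2 / 3 - e := by linarith
    rw [this]; ring
  linarith

lemma prod_ge_min {a b : ℝ} (ha : 0 ≤ a) (hb : 0 ≤ b) :
    (a ^ 2 ≤ b ^ 2 ∧ a ^ 2 ≤ a * b) ∨ (b ^ 2 ≤ a ^ 2 ∧ b ^ 2 ≤ a * b) := by
  rcases le_total a b with h | h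
  · left; constructor <;> nlinarith
  · right; constructor <;> nlinarith

set_option maxHeartbeats 1000000 in
lemma claim_one {a1 a2 a3 a4 b1 b2 b3 b4 : ℝ}
    (ha1 : 0 ≤ a1) (ha2 : 0 ≤ a2) (ha3 : 0 ≤ a3) (ha4 : 0 ≤ a4)
    (hb1 : 0 ≤ b1) (hb2 : 0 ≤ b2) (hb3 : 0 ≤ b3) (hb4 : 0 ≤ b4)
    (hA : a1 ^ 2 + a2 ^ 2 + a3 ^ 2 + a4 ^ 2 = 1)
    (hB : b1 ^ 2 + b2 ^ 2 + b3 ^ 2 + b4 ^ 2 = 1)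
    (hA12 : 1 / 3 < a1 ^ 2 + a2 ^ 2) (hA13 : 1 / 3 < a1 ^ 2 + a3 ^ 2)
    (hA14 : 1 / 3 < a1 ^ 2 + a4 ^ 2) (hA23 : 1 / 3 < a2 ^ 2 + a3 ^ 2)
    (hA24 : 1 / 3 < a2 ^ 2 + a4 ^ 2) (hA34 : 1 / 3 < a3 ^ 2 + a4 ^ 2)
    (hB12 : 1 / 3 < b1 ^ 2 + b2 ^ 2) (hB13 : 1 / 3 < b1 ^ 2 + b3 ^ 2)
    (hB14 : 1 / 3 < b1 ^ 2 + b4 ^ 2) (hB23 : 1 / 3 < b2 ^ 2 + b3 ^ 2)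
    (hB24 : 1 / 3 < b2 ^ 2 + b4 ^ 2) (hB34 : 1 / 3 < b3 ^ 2 + b4 ^ 2) :
    2 / 3 ≤ a1 * b1 + a2 * b2 + a3 * b3 + a4 * b4 := by
  by_contra hcon
  have n1 : ¬ 1 / 3 < a1 ^ 2 - b1 ^ 2 := fun h => hcon <| by
    have := bad_case ha1 ha2 ha3 ha4 hb1 hb2 hb3 hb4 (by linarith) (by linarith) (by linarith)
      (by linarith) (by linarith) (by linarith) (by linarith) h
    linarith
  have n2 : ¬ 1 / 3 < a2 ^ 2 - b2 ^ 2 := fun h => hcon <| by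
    have := bad_case ha2 ha1 ha3 ha4 hb2 hb1 hb3 hb4 (by linarith) (by linarith) (by linarith)
      (by linarith) (by linarith) (by linarith) (by linarith) h
    linarith
  have n3 : ¬ 1 / 3 < a3 ^ 2 - b3 ^ 2 := fun h => hcon <| by
    have := bad_case ha3 ha1 ha2 ha4 hb3 hb1 hb2 hb4 (by linarith) (by linarith) (by linarith)
      (by linarith) (by linarith) (by linarith) (by linarith) h
    linarith
  have n4 : ¬ 1 / 3 < a4 ^ 2 - b4 ^ 2 := fun h => hcon <| by
    have := bad_case ha4 ha1 ha2 ha3 hb4 hb1 hb2 hb3 (by linarith) (by linarith) (by linarith)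
      (by linarith) (by linarith) (by linarith) (by linarith) h
    linarith
  have m1 : ¬ 1 / 3 < b1 ^ 2 - a1 ^ 2 := fun h => hcon <| by
    have := bad_case hb1 hb2 hb3 hb4 ha1 ha2 ha3 ha4 (by linarith) (by linarith) (by linarith)
      (by linarith) (by linarith) (by linarith) (by linarith) h
    linarith
  have m2 : ¬ 1 / 3 < b2 ^ 2 - a2 ^ 2 := fun h => hcon <| by
    have := bad_case hb2 hb1 hb3 hb4 ha2 ha1 ha3 ha4 (by linarith) (by linarith) (by linarith)
      (by linarith) (by linarith) (by linarith) (by linarith) h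
    linarith
  have m3 : ¬ 1 / 3 < b3 ^ 2 - a3 ^ 2 := fun h => hcon <| by
    have := bad_case hb3 hb1 hb2 hb4 ha3 ha1 ha2 ha4 (by linarith) (by linarith) (by linarith)
      (by linarith) (by linarith) (by linarith) (by linarith) h
    linarith
  have m4 : ¬ 1 / 3 < b4 ^ 2 - a4 ^ 2 := fun h => hcon <| by
    have := bad_case hb4 hb1 hb2 hb3 ha4 ha1 ha2 ha3 (by linarith) (by linarith) (by linarith)
      (by linarith) (by linarith) (by linarith) (by linarith) h
    linarith
  rw [not_lt] at n1 n2 n3 n4 m1 m2 m3 m4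
  apply hcon
  rcases prod_ge_min ha1 hb1 with ⟨_, h1⟩ | ⟨_, h1⟩ <;>
  rcases prod_ge_min ha2 hb2 with ⟨_, h2⟩ | ⟨_, h2⟩ <;>
  rcases prod_ge_min ha3 hb3 with ⟨_, h3⟩ | ⟨_, h3⟩ <;>
  rcases prod_ge_min ha4 hb4 with ⟨_, h4⟩ | ⟨_, h4⟩ <;>
  linarith

set_option maxHeartbeats 1000000 in
/-- Case where both first squares are at least `1/3`. -/
lemma big_case {a1 a2 a3 a4 b1 b2 b3 b4 : ℝ}
    (ha1 : 0 ≤ a1) (ha2 : 0 ≤ a2) (ha3 : 0 ≤ a3) (ha4 : 0 ≤ a4)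
    (hb1 : 0 ≤ b1) (hb2 : 0 ≤ b2) (hb3 : 0 ≤ b3) (hb4 : 0 ≤ b4)
    (hA : a1 ^ 2 + a2 ^ 2 + a3 ^ 2 + a4 ^ 2 = 1)
    (hB : b1 ^ 2 + b2 ^ 2 + b3 ^ 2 + b4 ^ 2 = 1)
    (hA23 : 1 / 3 < a2 ^ 2 + a3 ^ 2)
    (hA24 : 1 / 3 < a2 ^ 2 + a4 ^ 2) (hA34 : 1 / 3 < a3 ^ 2 + a4 ^ 2)
    (hB23 : 1 / 3 < b2 ^ 2 + b3 ^ 2)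
    (hB24 : 1 / 3 < b2 ^ 2 + b4 ^ 2) (hB34 : 1 / 3 < b3 ^ 2 + b4 ^ 2)
    (hA1 : 1 / 3 ≤ a1 ^ 2) (hB1 : 1 / 3 ≤ b1 ^ 2) :
    a1 * b1 < a2 * b2 + a3 * b3 + a4 * b4 := by
  obtain ⟨P, hP⟩ : ∃ P, P = √(a1 ^ 2 - 1 / 3) := ⟨_, rfl⟩
  obtain ⟨Q, hQ⟩ : ∃ Q, Q = √(2 / 3 - a1 ^ 2) := ⟨_, rfl⟩
  obtain ⟨R, hR⟩ : ∃ R, R = √(b1 ^ 2 - 1 / 3) := ⟨_, rfl⟩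
  obtain ⟨S, hS⟩ : ∃ S, S = √(2 / 3 - b1 ^ 2) := ⟨_, rfl⟩
  have P0 : 0 ≤ P := hP ▸ Real.sqrt_nonneg _
  have R0 : 0 ≤ R := hR ▸ Real.sqrt_nonneg _
  have Q0 : 0 < Q := hQ ▸ Real.sqrt_pos.2 (by linarith)
  have S0 : 0 < S := hS ▸ Real.sqrt_pos.2 (by linarith)
  have P2 : P ^ 2 = a1 ^ 2 - 1 / 3 := by rw [hP, Real.sq_sqrt (by linarith)]
  have Q2 : Q ^ 2 = 2 / 3 - a1 ^ 2 := by rw [hQ, Real.sq_sqrt (by linarith)]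
  have R2 : R ^ 2 = b1 ^ 2 - 1 / 3 := by rw [hR, Real.sq_sqrt (by linarith)]
  have S2 : S ^ 2 = 2 / 3 - b1 ^ 2 := by rw [hS, Real.sq_sqrt (by linarith)]
  have PQ : P ≤ Q := by
    rw [hP, hQ]; exact Real.sqrt_le_sqrt (by linarith)
  have RS : R ≤ S := by
    rw [hR, hS]; exact Real.sqrt_le_sqrt (by linarith)
  have chord : ∀ x p q : ℝ, 0 ≤ x → 0 ≤ p → 0 < q → p ^ 2 ≤ x ^ 2 → x ^ 2 ≤ q ^ 2 →
      x ^ 2 + p * q ≤ (p + q) * x := by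
    intro x p q hx hp hq h1 h2
    have g1 : p ≤ x := le_of_abs_le (abs_le_of_sq_le_sq h1 hx)
    have g2 : x ≤ q := le_of_abs_le (abs_le_of_sq_le_sq h2 hq.le)
    have := mul_nonneg (sub_nonneg.2 g1) (sub_nonneg.2 g2)
    linarith
  have main : (P + Q) * (R + S) * (P * S + Q * R + Q * S)
      < (P + Q) * (R + S) * (a2 * b2 + a3 * b3 + a4 * b4) := by
    have prod : ∀ x y : ℝ, 0 ≤ x → 0 ≤ y → P ^ 2 ≤ x ^ 2 → x ^ 2 ≤ Q ^ 2 →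
        R ^ 2 ≤ y ^ 2 → y ^ 2 ≤ S ^ 2 →
        (x ^ 2 + P * Q) * (y ^ 2 + R * S) ≤ (P + Q) * (R + S) * (x * y) := by
      intro x y hx hy h1 h2 h3 h4
      have c1 := chord x P Q hx P0 Q0 h1 h2
      have c2 := chord y R S hy R0 S0 h3 h4
      have := mul_le_mul c1 c2 (by positivity) (by positivity)
      linarith
    have p2 := prod a2 b2 ha2 hb2 (by linarith) (by linarith) (by linarith) (by linarith)
    have p3 := prod a3 b3 ha3 hb3 (by linarith) (by linarith) (by linarith) (by linarith)
    have p4 := prod a4 b4 ha4 hb4 (by linarith) (by linarith) (by linarith) (by linarith)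
    have l2 : 0 < (Q ^ 2 - a2 ^ 2) * (S ^ 2 - b2 ^ 2) := mul_pos (by linarith) (by linarith)
    have l3 : 0 < (Q ^ 2 - a3 ^ 2) * (S ^ 2 - b3 ^ 2) := mul_pos (by linarith) (by linarith)
    have l4 : 0 < (Q ^ 2 - a4 ^ 2) * (S ^ 2 - b4 ^ 2) := mul_pos (by linarith) (by linarith)
    have eA : a4 ^ 2 = P ^ 2 + 2 * Q ^ 2 - a2 ^ 2 - a3 ^ 2 := by linarith
    have eB : b4 ^ 2 = R ^ 2 + 2 * S ^ 2 - b2 ^ 2 - b3 ^ 2 := by linarith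
    rw [eA, eB] at p4 l4
    linarith
  have hlt := lt_of_mul_lt_mul_left main (by positivity)
  refine lt_of_le_of_lt ?_ hlt
  have e1 : a1 ^ 2 = 2 * P ^ 2 + Q ^ 2 := by linarith
  have e2 : b1 ^ 2 = 2 * R ^ 2 + S ^ 2 := by linarith
  have nn : 0 ≤ P * S + Q * R + Q * S := by positivity
  apply le_of_abs_le
  refine abs_le_of_sq_le_sq ?_ nn
  rw [mul_pow, e1, e2]
  have hu : P * S ≤ Q * S := mul_le_mul_of_nonneg_right PQ S0.le
  have hv : Q * R ≤ Q * S := mul_le_mul_of_nonneg_left RS Q0.le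
  have hPR : P * R ≤ Q * R := mul_le_mul_of_nonneg_right PQ R0
  have hPR' : P * R ≤ P * S := mul_le_mul_of_nonneg_left RS P0
  have hPR0 : 0 ≤ P * R := mul_nonneg P0 R0
  have hPS0 : 0 ≤ P * S := mul_nonneg P0 S0.le
  have hQR0 : 0 ≤ Q * R := mul_nonneg Q0.le R0
  have hQS0 : 0 ≤ Q * S := mul_nonneg Q0.le S0.le
  have t1 := mul_le_mul_of_nonneg_left hu hPS0
  have t2 := mul_le_mul_of_nonneg_left hv hQR0
  have t3 := mul_le_mul hPR' hPR hPR0 hPS0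
  have t4 := mul_le_mul_of_nonneg_left hv hPS0
  have t5 := mul_le_mul_of_nonneg_left hu hQR0
  linarith

lemma small_case {a1 a2 a3 a4 b1 b2 b3 b4 : ℝ}
    (ha1 : 0 ≤ a1) (ha2 : 0 ≤ a2) (ha3 : 0 ≤ a3) (ha4 : 0 ≤ a4)
    (hb1 : 0 ≤ b1) (hb2 : 0 ≤ b2) (hb3 : 0 ≤ b3) (hb4 : 0 ≤ b4)
    (hA : a1 ^ 2 + a2 ^ 2 + a3 ^ 2 + a4 ^ 2 = 1)
    (hB : b1 ^ 2 + b2 ^ 2 + b3 ^ 2 + b4 ^ 2 = 1)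
    (hA23 : 1 / 3 < a2 ^ 2 + a3 ^ 2)
    (hA24 : 1 / 3 < a2 ^ 2 + a4 ^ 2) (hA34 : 1 / 3 < a3 ^ 2 + a4 ^ 2)
    (hB23 : 1 / 3 < b2 ^ 2 + b3 ^ 2)
    (hB24 : 1 / 3 < b2 ^ 2 + b4 ^ 2) (hB34 : 1 / 3 < b3 ^ 2 + b4 ^ 2)
    (pa : 0 < a1) (pb : 0 < b1) (hB1 : b1 ^ 2 ≤ 1 / 3) :
    a1 * b1 < a2 * b2 + a3 * b3 + a4 * b4 := by
  have A0 : 0 < a1 ^ 2 := by positivity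
  have B0 : 0 < b1 ^ 2 := by positivity
  have Ah : a1 ^ 2 < 1 / 2 := by linarith
  have Bh : b1 ^ 2 < 1 / 2 := by linarith
  -- pair estimates, one coordinate from `B`, two from `A`
  have one : ∀ x y : ℝ, 0 ≤ y → 1 / 3 < x → a1 ^ 2 * b1 ^ 2 < a1 ^ 2 * x + b1 ^ 2 * y := by
    intro x y hy hx
    have := mul_lt_mul_of_pos_left (lt_of_le_of_lt hB1 hx) A0
    have := mul_nonneg B0.le hy
    linarith
  have two : ∀ x y : ℝ, 0 ≤ x → a1 ^ 2 - 1 / 3 < x → 1 / 3 < y →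
      a1 ^ 2 * b1 ^ 2 < a1 ^ 2 * x + b1 ^ 2 * y := by
    intro x y hx0 hx hy
    have h1 := mul_lt_mul_of_pos_left hy B0
    rcases le_total (a1 ^ 2) (1 / 3) with h | h
    · have := mul_nonneg A0.le hx0
      have := mul_le_mul_of_nonneg_right h B0.le
      linarith
    · have h2 := mul_lt_mul_of_pos_left hx A0
      have h3 := mul_nonneg (sub_nonneg.2 h) (sub_nonneg.2 (hB1.trans h))
      linarith
  have c : ∀ x y : ℝ, 0 ≤ x → 0 ≤ y →
      a1 ^ 2 * x ^ 2 ≤ (a1 * b1) * (x * y) ∨ b1 ^ 2 * y ^ 2 ≤ (a1 * b1) * (x * y) := by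
    intro x y hx hy
    rcases prod_ge_min (mul_nonneg ha1 hx) (mul_nonneg hb1 hy) with ⟨_, h⟩ | ⟨_, h⟩
    · left; linarith
    · right; linarith
  have key : (a1 * b1) * (a1 * b1) < (a1 * b1) * (a2 * b2 + a3 * b3 + a4 * b4) := by
    have z0 : a1 ^ 2 * b1 ^ 2 < a1 ^ 2 * (a2 ^ 2 + a3 ^ 2 + a4 ^ 2) :=
      mul_lt_mul_of_pos_left (by linarith) A0
    have z3 : b1 ^ 2 * a1 ^ 2 < b1 ^ 2 * (b2 ^ 2 + b3 ^ 2 + b4 ^ 2) :=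
      mul_lt_mul_of_pos_left (by linarith) B0
    have o2 := one (a3 ^ 2 + a4 ^ 2) (b2 ^ 2) (sq_nonneg _) (by linarith)
    have o3 := one (a2 ^ 2 + a4 ^ 2) (b3 ^ 2) (sq_nonneg _) (by linarith)
    have o4 := one (a2 ^ 2 + a3 ^ 2) (b4 ^ 2) (sq_nonneg _) (by linarith)
    have t2 := two (a2 ^ 2) (b3 ^ 2 + b4 ^ 2) (sq_nonneg _) (by linarith) (by linarith)
    have t3 := two (a3 ^ 2) (b2 ^ 2 + b4 ^ 2) (sq_nonneg _) (by linarith) (by linarith)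
    have t4 := two (a4 ^ 2) (b2 ^ 2 + b3 ^ 2) (sq_nonneg _) (by linarith) (by linarith)
    rcases c a2 b2 ha2 hb2 with h2 | h2 <;> rcases c a3 b3 ha3 hb3 with h3 | h3 <;>
    rcases c a4 b4 ha4 hb4 with h4 | h4 <;> linarith
  exact lt_of_mul_lt_mul_left key (mul_nonneg ha1 hb1)

lemma claim_two {a1 a2 a3 a4 b1 b2 b3 b4 : ℝ}
    (ha1 : 0 ≤ a1) (ha2 : 0 ≤ a2) (ha3 : 0 ≤ a3) (ha4 : 0 ≤ a4)
    (hb1 : 0 ≤ b1) (hb2 : 0 ≤ b2) (hb3 : 0 ≤ b3) (hb4 : 0 ≤ b4)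
    (hA : a1 ^ 2 + a2 ^ 2 + a3 ^ 2 + a4 ^ 2 = 1)
    (hB : b1 ^ 2 + b2 ^ 2 + b3 ^ 2 + b4 ^ 2 = 1)
    (hA23 : 1 / 3 < a2 ^ 2 + a3 ^ 2)
    (hA24 : 1 / 3 < a2 ^ 2 + a4 ^ 2) (hA34 : 1 / 3 < a3 ^ 2 + a4 ^ 2)
    (hB23 : 1 / 3 < b2 ^ 2 + b3 ^ 2)
    (hB24 : 1 / 3 < b2 ^ 2 + b4 ^ 2) (hB34 : 1 / 3 < b3 ^ 2 + b4 ^ 2)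
    (hc : 2 / 3 ≤ a1 * b1 + a2 * b2 + a3 * b3 + a4 * b4) :
    a1 * b1 < a2 * b2 + a3 * b3 + a4 * b4 := by
  rcases ha1.eq_or_lt with h | pa
  · rw [← h] at hc ⊢; linarith
  rcases hb1.eq_or_lt with h | pb
  · rw [← h] at hc ⊢; linarith
  rcases le_total (b1 ^ 2) (1 / 3) with h | h
  · exact small_case ha1 ha2 ha3 ha4 hb1 hb2 hb3 hb4 hA hB hA23 hA24 hA34 hB23 hB24 hB34 pa pb h
  rcases le_total (a1 ^ 2) (1 / 3) with h' | h'
  · have := small_case hb1 hb2 hb3 hb4 ha1 ha2 ha3 ha4 hB hA hB23 hB24 hB34 hA23 hA24 hA34 pb pa h'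
    linarith
  · exact big_case ha1 ha2 ha3 ha4 hb1 hb2 hb3 hb4 hA hB hA23 hA24 hA34 hB23 hB24 hB34 h' h

set_option maxHeartbeats 1000000 in
lemma core (a b : Fin 4 → ℝ)
    (hA : a 0 ^ 2 + a 1 ^ 2 + a 2 ^ 2 + a 3 ^ 2 = 1)
    (hB : b 0 ^ 2 + b 1 ^ 2 + b 2 ^ 2 + b 3 ^ 2 = 1)
    (hC : a 0 * b 0 + a 1 * b 1 + a 2 * b 2 + a 3 * b 3 = 0)
    (H : ∀ i j : Fin 4, i < j → ∀ m n : ℤ, (m ≠ 0 ∨ n ≠ 0) →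
      1 / 3 < (a i * m + b i * n) ^ 2 + (a j * m + b j * n) ^ 2) : False := by
  have HA : ∀ i j : Fin 4, i < j → 1 / 3 < |a i| ^ 2 + |a j| ^ 2 := by
    intro i j h
    have := H i j h 1 0 (by simp)
    simpa using this
  have HB : ∀ i j : Fin 4, i < j → 1 / 3 < |b i| ^ 2 + |b j| ^ 2 := by
    intro i j h
    have := H i j h 0 1 (by simp)
    simpa using this
  have HP : ∀ i j : Fin 4, i < j →
      1 / 3 < a i ^ 2 + a j ^ 2 + b i ^ 2 + b j ^ 2 + 2 * (a i * b i + a j * b j) := by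
    intro i j h
    have := H i j h 1 1 (by simp)
    push_cast at this
    linarith
  have HM : ∀ i j : Fin 4, i < j →
      1 / 3 < a i ^ 2 + a j ^ 2 + b i ^ 2 + b j ^ 2 - 2 * (a i * b i + a j * b j) := by
    intro i j h
    have := H i j h 1 (-1) (by simp)
    push_cast at this
    linarith
  have hA' : |a 0| ^ 2 + |a 1| ^ 2 + |a 2| ^ 2 + |a 3| ^ 2 = 1 := by simpa using hA
  have hB' : |b 0| ^ 2 + |b 1| ^ 2 + |b 2| ^ 2 + |b 3| ^ 2 = 1 := by simpa using hB
  have A01 := HA 0 1 (by decide)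
  have A02 := HA 0 2 (by decide)
  have A03 := HA 0 3 (by decide)
  have A12 := HA 1 2 (by decide)
  have A13 := HA 1 3 (by decide)
  have A23 := HA 2 3 (by decide)
  have B01 := HB 0 1 (by decide)
  have B02 := HB 0 2 (by decide)
  have B03 := HB 0 3 (by decide)
  have B12 := HB 1 2 (by decide)
  have B13 := HB 1 3 (by decide)
  have B23 := HB 2 3 (by decide)
  have na := fun i => abs_nonneg (a i)
  have nb := fun i => abs_nonneg (b i)
  have c := claim_one (na 0) (na 1) (na 2) (na 3) (nb 0) (nb 1) (nb 2) (nb 3) hA' hB'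
    A01 A02 A03 A12 A13 A23 B01 B02 B03 B12 B13 B23
  have d0 := claim_two (na 0) (na 1) (na 2) (na 3) (nb 0) (nb 1) (nb 2) (nb 3) hA' hB'
    A12 A13 A23 B12 B13 B23 c
  have d1 := claim_two (na 1) (na 0) (na 2) (na 3) (nb 1) (nb 0) (nb 2) (nb 3)
    (by linarith) (by linarith) A02 A03 A23 B02 B03 B23 (by linarith)
  have d2 := claim_two (na 2) (na 0) (na 1) (na 3) (nb 2) (nb 0) (nb 1) (nb 3)
    (by linarith) (by linarith) A01 A03 A13 B01 B03 B13 (by linarith)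
  have d3 := claim_two (na 3) (na 0) (na 1) (na 2) (nb 3) (nb 0) (nb 1) (nb 2)
    (by linarith) (by linarith) A01 A02 A12 B01 B02 B12 (by linarith)
  simp only [← abs_mul] at c d0 d1 d2 d3
  have P01 := HP 0 1 (by decide)
  have P02 := HP 0 2 (by decide)
  have P03 := HP 0 3 (by decide)
  have P12 := HP 1 2 (by decide)
  have P13 := HP 1 3 (by decide)
  have P23 := HP 2 3 (by decide)
  have M01 := HM 0 1 (by decide)
  have M02 := HM 0 2 (by decide)
  have M03 := HM 0 3 (by decide)
  have M12 := HM 1 2 (by decide)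
  have M13 := HM 1 3 (by decide)
  have M23 := HM 2 3 (by decide)
  clear HA HB HP HM H A01 A02 A03 A12 A13 A23 B01 B02 B03 B12 B13 B23 hA' hB'
  rcases abs_cases (a 0 * b 0) with ⟨e0, s0⟩ | ⟨e0, s0⟩ <;>
  rcases abs_cases (a 1 * b 1) with ⟨e1, s1⟩ | ⟨e1, s1⟩ <;>
  rcases abs_cases (a 2 * b 2) with ⟨e2, s2⟩ | ⟨e2, s2⟩ <;>
  rcases abs_cases (a 3 * b 3) with ⟨e3, s3⟩ | ⟨e3, s3⟩ <;>
  rw [e0, e1, e2, e3] at c d0 d1 d2 d3 <;> linarith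

lemma sum_rowsSub (Φ : Matrix (Fin 4) (Fin 2) ℝ) (i j : Fin 4) (hij : i < j)
    (hS : ({i, j} : Finset (Fin 4)).card = 2) (u : Fin 2 → ℝ) :
    sqnorm ((rowsSub Φ ⟨{i, j}, hS⟩).mulVec u)
      = (Φ i 0 * u 0 + Φ i 1 * u 1) ^ 2 + (Φ j 0 * u 0 + Φ j 1 * u 1) ^ 2 := by
  have h1 : sqnorm ((rowsSub Φ ⟨{i, j}, hS⟩).mulVec u)
      = ∑ x : ({i, j} : Finset (Fin 4)), (Φ x 0 * u 0 + Φ x 1 * u 1) ^ 2 := by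
    unfold sqnorm
    rw [← Equiv.sum_comp (({i, j} : Finset (Fin 4)).orderIsoOfFin hS).toEquiv]
    apply Finset.sum_congr rfl
    intro k _
    simp [Matrix.mulVec, dotProduct, Fin.sum_univ_two, rowsSub]
  rw [h1, Finset.sum_coe_sort ({i, j} : Finset (Fin 4))
    (fun x => (Φ x 0 * u 0 + Φ x 1 * u 1) ^ 2), Finset.sum_pair hij.ne]

/-- For any `4 × 2` matrix `Φ` with orthonormal columns, some child lattice
`Φ_S ℤ²` (with `S` a 2-subset of the rows) has a nonzero vector of squared
length at most `1/3`. -/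
theorem exists_child_short_vector (Φ : Matrix (Fin 4) (Fin 2) ℝ) (hΦ : Φᵀ * Φ = 1) :
    ∃ S : {s : Finset (Fin 4) // s.card = 2}, ∃ u : Fin 2 → ℤ, u ≠ 0 ∧
      sqnorm ((rowsSub Φ S).mulVec fun j => (u j : ℝ)) ≤ 1 / 3 := by
  by_contra hcon
  push Not at hcon
  have h00 := congrFun (congrFun hΦ 0) 0
  have h11 := congrFun (congrFun hΦ 1) 1
  have h01 := congrFun (congrFun hΦ 0) 1
  simp [Matrix.mul_apply, Fin.sum_univ_four] at h00 h11 h01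
  refine core (fun i => Φ i 0) (fun i => Φ i 1) (by linarith) (by linarith) (by linarith) ?_
  intro i j hij m n hmn
  have hS : ({i, j} : Finset (Fin 4)).card = 2 := Finset.card_pair hij.ne
  have hu : (![m, n] : Fin 2 → ℤ) ≠ 0 := by
    intro h
    have h0 := congrFun h 0
    have h1 := congrFun h 1
    simp at h0 h1
    tauto
  have := hcon ⟨{i, j}, hS⟩ ![m, n] hu
  rw [sum_rowsSub Φ i j hij hS] at this
  simpa using this
end

section
/- Let a = 1/√3 and let Φ be the 4×2 real matrix with rows (a, a), (a, −a), (a, 0), (0, a) (i.e., Φᵀ = [[a,a,a,0],[a,−a,0,a]]). Then Φᵀ Φ = I₂, and for every 2-element subset S of {1,2,3,4} and every nonzero u ∈ ℤ², ‖Φ_S u‖² ≥ 1/3, where Φ_S is the 2×2 matrix of rows of Φ indexed by S. Moreover there exist a 2-subset S and a nonzero u ∈ ℤ² with ‖Φ_S u‖² = 1/3. -/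
open Matrix

theorem sqnorm_rowsSub {n k : ℕ} (Φ : Matrix (Fin n) (Fin k) ℝ)
    (S : {s : Finset (Fin n) // s.card = k}) (v : Fin k → ℝ) :
    sqnorm ((rowsSub Φ S).mulVec v) = ∑ i ∈ S.1, (Φ.mulVec v i) ^ 2 := by
  rw [← Finset.sum_coe_sort S.1]
  exact Equiv.sum_comp (S.1.orderIsoOfFin S.2).toEquiv
    (fun i : S.1 => (Φ.mulVec v i) ^ 2)

theorem two_subsets : ∀ s : Finset (Fin 4), s.card = 2 →
    s = {0, 1} ∨ s = {0, 2} ∨ s = {0, 3} ∨ s = {1, 2} ∨ s = {1, 3} ∨ s = {2, 3} := by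
  decide

theorem int_bound (p q : ℤ) (h : ¬ (p = 0 ∧ q = 0)) (a : ℝ) (ha : a ^ 2 = 1 / 3) :
    1 / 3 ≤ (a * p) ^ 2 + (a * q) ^ 2 := by
  have h1 : 1 ≤ p ^ 2 + q ^ 2 := by
    by_contra hc
    apply h
    constructor <;> nlinarith [sq_nonneg p, sq_nonneg q]
  have h2 : (1 : ℝ) ≤ (p : ℝ) ^ 2 + (q : ℝ) ^ 2 := by exact_mod_cast h1
  rw [mul_pow, mul_pow, ha]
  linarith

/-- The paper's `(4,2)` construction with `a = 1/√3`: `Φ` has orthonormal columns,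
every child lattice `Φ_S ℤ²` has squared shortest nonzero vector at least `1/3`,
and the value `1/3` is attained. -/
theorem four_two_construction :
    letI a : ℝ := 1 / Real.sqrt 3
    letI Φ : Matrix (Fin 4) (Fin 2) ℝ := !![a, a; a, -a; a, 0; 0, a]
    Φᵀ * Φ = 1 ∧
    (∀ S : {s : Finset (Fin 4) // s.card = 2}, ∀ u : Fin 2 → ℤ, u ≠ 0 →
      1 / 3 ≤ sqnorm ((rowsSub Φ S).mulVec fun j => (u j : ℝ))) ∧
    (∃ S : {s : Finset (Fin 4) // s.card = 2}, ∃ u : Fin 2 → ℤ, u ≠ 0 ∧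
      sqnorm ((rowsSub Φ S).mulVec fun j => (u j : ℝ)) = 1 / 3) := by
  have ha : (1 / Real.sqrt 3) ^ 2 = 1 / 3 := by
    rw [div_pow, Real.sq_sqrt (by norm_num)]; norm_num
  generalize (1 / Real.sqrt 3) = a at ha
  refine ⟨?_, ?_, ?_⟩
  · ext i j
    fin_cases i <;> fin_cases j <;>
      simp [Matrix.mul_apply, Fin.sum_univ_four] <;> nlinarith
  · intro S u hu
    have hu' : ¬ (u 0 = 0 ∧ u 1 = 0) := by
      rintro ⟨h0, h1⟩
      apply hu
      ext i
      fin_cases i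
      · exact h0
      · exact h1
    rw [sqnorm_rowsSub]
    obtain ⟨s, hs⟩ := S
    rcases two_subsets s hs with h | h | h | h | h | h <;> subst h <;>
      rw [Finset.sum_pair (by decide)]
    · convert int_bound (u 0 + u 1) (u 0 - u 1) (by omega) a ha using 3 <;>
        simp [Matrix.mulVec, dotProduct, Fin.sum_univ_two] <;> ring
    · convert int_bound (u 0 + u 1) (u 0) (by omega) a ha using 3 <;>
        simp [Matrix.mulVec, dotProduct, Fin.sum_univ_two] <;> ring
    · convert int_bound (u 0 + u 1) (u 1) (by omega) a ha using 3 <;>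
        simp [Matrix.mulVec, dotProduct, Fin.sum_univ_two] <;> ring
    · convert int_bound (u 0 - u 1) (u 0) (by omega) a ha using 3 <;>
        simp [Matrix.mulVec, dotProduct, Fin.sum_univ_two] <;> ring
    · convert int_bound (u 0 - u 1) (u 1) (by omega) a ha using 3 <;>
        simp [Matrix.mulVec, dotProduct, Fin.sum_univ_two] <;> ring
    · convert int_bound (u 0) (u 1) (by omega) a ha using 3 <;>
        simp [Matrix.mulVec, dotProduct, Fin.sum_univ_two]
  · refine ⟨⟨{2, 3}, by decide⟩, ![1, 0], by simp, ?_⟩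
    rw [sqnorm_rowsSub, Finset.sum_pair (by decide)]
    simp [Matrix.mulVec, dotProduct, Fin.sum_univ_two]
    linarith
end

section
/- Let Φ be any 4×3 real matrix with orthonormal columns (Φᵀ Φ = I₃). Then there exists a 3-element subset S of {1,2,3,4} and a nonzero u ∈ ℤ³ such that ‖Φ_S u‖² ≤ 3/4, where Φ_S is the 3×3 matrix of rows of Φ indexed by S. -/
open Matrix

/-- For any `4 × 3` matrix `Φ` with orthonormal columns, some child lattice
`Φ_S ℤ³` (with `S` a 3-subset of the rows) has a nonzero vector of squared
length at most `3/4`. -/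
theorem exists_child_short_vector_four_three
    (Φ : Matrix (Fin 4) (Fin 3) ℝ) (hΦ : Φᵀ * Φ = 1) :
    ∃ S : {s : Finset (Fin 4) // s.card = 3}, ∃ u : Fin 3 → ℤ, u ≠ 0 ∧
      sqnorm ((rowsSub Φ S).mulVec fun j => (u j : ℝ)) ≤ 3 / 4 := by
  have h0 : ∑ i, Φ i 0 ^ 2 = 1 := by
    have h := congrFun (congrFun hΦ 0) 0
    simp only [Matrix.mul_apply, Matrix.transpose_apply, Matrix.one_apply_eq] at h
    rw [← h]
    exact Finset.sum_congr rfl fun i _ => sq _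
  obtain ⟨i, hi⟩ : ∃ i, 1 / 4 ≤ Φ i 0 ^ 2 := by
    by_contra! hc
    rw [Fin.sum_univ_four] at h0
    linarith [hc 0, hc 1, hc 2, hc 3]
  have hcard : (Finset.univ.erase i : Finset (Fin 4)).card = 3 := by
    simp
  refine ⟨⟨Finset.univ.erase i, hcard⟩, Pi.single 0 1, by simp, ?_⟩
  have hv : (rowsSub Φ ⟨Finset.univ.erase i, hcard⟩).mulVec
      (fun j => (((Pi.single 0 1 : Fin 3 → ℤ) j : ℤ) : ℝ)) =
      fun k => Φ ((Finset.univ.erase i).orderIsoOfFin hcard k : Fin 4) 0 := by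
    funext k
    simp [Matrix.mulVec, dotProduct, rowsSub, Fin.sum_univ_three, Pi.single_apply]
  have hs : ∑ k : Fin 3, Φ ((Finset.univ.erase i).orderIsoOfFin hcard k : Fin 4) 0 ^ 2
      = ∑ x ∈ Finset.univ.erase i, Φ x 0 ^ 2 := by
    rw [← Finset.sum_coe_sort (Finset.univ.erase i) (fun x => Φ x 0 ^ 2)]
    exact Equiv.sum_comp ((Finset.univ.erase i).orderIsoOfFin hcard).toEquiv
      (fun x => Φ (x : Fin 4) 0 ^ 2)
  rw [hv, sqnorm, hs]
  have := Finset.add_sum_erase Finset.univ (fun x => Φ x 0 ^ 2) (Finset.mem_univ i)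
  linarith
end

section
/- Let n ≥ k ≥ 1, let Φ be an n×k real matrix with orthonormal columns (Φᵀ Φ = I_k), and let V be an invertible k×k real matrix. Assume that for every k-element subset S of {1,…,n} the matrix Φ_S V is invertible, where Φ_S is the submatrix of rows of Φ indexed by S. Define ρ_S = (1/2)·inf{ ‖Φ_S V u‖ : u ∈ ℤ^k, u ≠ 0 } and ρ_V = (1/2)·inf{ ‖V u‖ : u ∈ ℤ^k, u ≠ 0 }; let V_k denote the Lebesgue volume of the unit Euclidean ball in ℝ^k; define the packing densities Δ_S = V_k ρ_S^k / √(det((Φ_S V)ᵀ Φ_S V)) and Δ_V = V_k ρ_V^k / √(det(Vᵀ V)), and the contraction ratios β_S = (ρ_S/ρ_V)^k. Let N = C(n,k), and let β^# = (∏_S β_S)^{1/N} and Δ^# = (∏_S Δ_S)^{1/N} be the geometric means over all k-element subsets S of {1,…,n}. Then (β^# · Δ_V)² ≤ (Δ^#)² / N. -/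
open Matrix

/-- Packing radius of the lattice `M ℤ^k`: half the length of its shortest
nonzero vector. -/
noncomputable def packRad {k : ℕ} (M : Matrix (Fin k) (Fin k) ℝ) : ℝ :=
  (1 / 2) * sInf {t : ℝ | ∃ u : Fin k → ℤ, u ≠ 0 ∧
    t = Real.sqrt (sqnorm (M.mulVec fun j => (u j : ℝ)))}

/-- Lebesgue volume of the unit Euclidean ball in `ℝ^k`. -/
noncomputable def unitBallVol (k : ℕ) : ℝ :=
  (MeasureTheory.volume (Metric.ball (0 : EuclideanSpace ℝ (Fin k)) 1)).toReal

/-- Packing density of the lattice `M ℤ^k`: `V_k ρ^k / √(det (Mᵀ M))`. -/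
noncomputable def packDensity {k : ℕ} (M : Matrix (Fin k) (Fin k) ℝ) : ℝ :=
  unitBallVol k * packRad M ^ k / Real.sqrt ((Mᵀ * M).det)


lemma cb_expand {n k : ℕ} (A : Matrix (Fin k) (Fin n) ℝ) (B : Matrix (Fin n) (Fin k) ℝ) :
    (A * B).det = ∑ f : Fin k → Fin n, (∏ i, A i (f i)) * (B.submatrix f id).det := by
  have h : (A * B) = fun i => ∑ j : Fin n, A i j • B j := by
    ext i j
    simp [Matrix.mul_apply, Finset.sum_apply]
  have h2 : (A * B).det = (Matrix.detRowAlternating (R := ℝ) (n := Fin k)).toMultilinearMap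
      (fun i => ∑ j : Fin n, A i j • B j) := by
    rw [h]; rfl
  rw [h2, MultilinearMap.map_sum]
  refine Finset.sum_congr rfl fun f _ => ?_
  rw [MultilinearMap.map_smul_univ]
  rfl

lemma cb_sum {n k : ℕ} (B : Matrix (Fin n) (Fin k) ℝ) :
    ∑ S : {s : Finset (Fin n) // s.card = k}, (rowsSub B S).det ^ 2 = (Bᵀ * B).det := by
  rw [cb_expand]
  have h1 : ∀ S : {s : Finset (Fin n) // s.card = k}, (rowsSub B S).det ^ 2 =
      ∑ σ : Equiv.Perm (Fin k), (∏ i, Bᵀ i (S.1.orderIsoOfFin S.2 (σ i) : Fin n)) *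
        (B.submatrix (fun i => (S.1.orderIsoOfFin S.2 (σ i) : Fin n)) id).det := by
    intro S
    have h2 : ∀ σ : Equiv.Perm (Fin k),
        (B.submatrix (fun i => (S.1.orderIsoOfFin S.2 (σ i) : Fin n)) id).det
          = (Equiv.Perm.sign σ : ℝ) * (rowsSub B S).det := by
      intro σ
      rw [← Matrix.det_permute]
      rfl
    simp_rw [h2]
    rw [sq]
    nth_rewrite 1 [Matrix.det_apply']
    rw [Finset.sum_mul]
    refine Finset.sum_congr rfl fun σ _ => ?_
    simp only [rowsSub, Matrix.transpose_apply]
    ring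
  simp_rw [h1]
  rw [Finset.sum_sigma']
  refine Finset.sum_of_injOn (fun p i => (p.1.1.orderIsoOfFin p.1.2 (p.2 i) : Fin n)) ?_ ?_ ?_ ?_
  · rintro ⟨S, σ⟩ _ ⟨T, τ⟩ _ h
    have hr : ∀ (S : {s : Finset (Fin n) // s.card = k}) (σ : Equiv.Perm (Fin k)),
        Set.range (fun i => (S.1.orderIsoOfFin S.2 (σ i) : Fin n)) = (S.1 : Set (Fin n)) := by
      intro S σ
      ext x
      constructor
      · rintro ⟨i, rfl⟩
        exact (S.1.orderIsoOfFin S.2 (σ i)).2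
      · intro hx
        exact ⟨σ.symm ((S.1.orderIsoOfFin S.2).symm ⟨x, hx⟩), by simp⟩
    have hST : S = T := by
      apply Subtype.ext
      apply Finset.coe_injective
      rw [← hr S σ, ← hr T τ]
      exact congrArg Set.range h
    subst hST
    congr 1
    ext i
    have := congrFun h i
    have h3 := (S.1.orderIsoOfFin S.2).injective (Subtype.ext this)
    exact congrArg Fin.val h3
  · intro _ _; simp
  · intro f _ hf
    by_cases hinj : Function.Injective f
    · exfalso
      apply hf
      have hc : (Finset.univ.image f).card = k := by
        rw [Finset.card_image_of_injective _ hinj]; simp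
      let e := Finset.orderIsoOfFin (Finset.univ.image f) hc
      let g : Fin k → Fin k := fun i => e.symm ⟨f i, by simp⟩
      have hg : Function.Injective g := by
        intro a b hab
        have := e.symm.injective hab
        exact hinj (congrArg Subtype.val this)
      refine ⟨⟨⟨_, hc⟩, Equiv.ofBijective g (Finite.injective_iff_bijective.mp hg)⟩, by simp, ?_⟩
      funext i
      change ((e (e.symm ⟨f i, _⟩) : _) : Fin n) = f i
      simp
    · rw [Function.Injective] at hinj
      push Not at hinj
      obtain ⟨a, b, hab, hne⟩ := hinj
      rw [Matrix.det_zero_of_row_eq hne, mul_zero]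
      ext j
      simp [hab]
  · intro _ _; rfl

lemma packRad_nonneg' {k : ℕ} (M : Matrix (Fin k) (Fin k) ℝ) : 0 ≤ packRad M := by
  unfold packRad
  refine mul_nonneg (by norm_num) (Real.sInf_nonneg ?_)
  rintro t ⟨u, _, rfl⟩
  exact Real.sqrt_nonneg _

lemma sqrt_gram {k : ℕ} (M : Matrix (Fin k) (Fin k) ℝ) :
    Real.sqrt ((Mᵀ * M).det) = |M.det| := by
  rw [Matrix.det_mul, Matrix.det_transpose, Real.sqrt_mul_self_eq_abs]

lemma packDensity_nonneg' {k : ℕ} (M : Matrix (Fin k) (Fin k) ℝ) : 0 ≤ packDensity M := by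
  unfold packDensity unitBallVol
  have := packRad_nonneg' M
  positivity

/-- The paper's Determinant Bound (Theorem 1): with `β^#` and `Δ^#` the geometric
means over all `k`-subsets `S` of the contraction ratios `β_S = (ρ_S/ρ_V)^k` and of
the packing densities `Δ_S` of the child lattices `Φ_S V ℤ^k`, one has
`(β^# Δ_V)² ≤ (Δ^#)² / C(n,k)`. -/
theorem determinant_bound (n k : ℕ) (hk : 1 ≤ k) (hkn : k ≤ n)
    (Φ : Matrix (Fin n) (Fin k) ℝ) (hΦ : Φᵀ * Φ = 1)
    (V : Matrix (Fin k) (Fin k) ℝ) (hV : IsUnit V.det)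
    (hSV : ∀ S : {s : Finset (Fin n) // s.card = k}, IsUnit (rowsSub Φ S * V).det) :
    ((∏ S : {s : Finset (Fin n) // s.card = k},
          (packRad (rowsSub Φ S * V) / packRad V) ^ k) ^ ((1 : ℝ) / (n.choose k : ℝ))
        * packDensity V) ^ 2
      ≤ ((∏ S : {s : Finset (Fin n) // s.card = k},
          packDensity (rowsSub Φ S * V)) ^ ((1 : ℝ) / (n.choose k : ℝ))) ^ 2
        / (n.choose k : ℝ) := by
  have hN : 0 < n.choose k := Nat.choose_pos hkn
  have hNR : (0 : ℝ) < (n.choose k : ℝ) := by exact_mod_cast hN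
  have hcard : Fintype.card {s : Finset (Fin n) // s.card = k} = n.choose k := by
    simp
  rcases (packRad_nonneg' V).eq_or_lt with h0 | hpos
  · have : packDensity V = 0 := by
      unfold packDensity
      rw [← h0, zero_pow (by omega)]; simp
    rw [this]
    simp only [mul_zero]
    rw [zero_pow two_ne_zero]
    exact div_nonneg (sq_nonneg _) hNR.le
  have hv : V.det ≠ 0 := hV.ne_zero
  set w : ℝ := (1 : ℝ) / (n.choose k : ℝ) with hw
  have hwpos : 0 < w := by positivity
  have key : ∀ S : {s : Finset (Fin n) // s.card = k},
      (packRad (rowsSub Φ S * V) / packRad V) ^ k * packDensity V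
        = packDensity (rowsSub Φ S * V) * |(rowsSub Φ S).det| := by
    intro S
    have hs : (rowsSub Φ S).det ≠ 0 := by
      have := (hSV S).ne_zero
      rw [Matrix.det_mul] at this
      exact left_ne_zero_of_mul this
    unfold packDensity
    rw [sqrt_gram, sqrt_gram, Matrix.det_mul, abs_mul, div_pow]
    have h1 : |V.det| ≠ 0 := abs_ne_zero.mpr hv
    have h2 : |(rowsSub Φ S).det| ≠ 0 := abs_ne_zero.mpr hs
    have h3 : packRad V ^ k ≠ 0 := (pow_pos hpos k).ne'
    field_simp
  have hDV := packDensity_nonneg' V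
  have hβ : ∀ S : {s : Finset (Fin n) // s.card = k},
      0 ≤ (packRad (rowsSub Φ S * V) / packRad V) ^ k := fun S =>
    pow_nonneg (div_nonneg (packRad_nonneg' _) (packRad_nonneg' _)) _
  have e1 : (∏ S : {s : Finset (Fin n) // s.card = k},
      (packRad (rowsSub Φ S * V) / packRad V) ^ k) ^ w * packDensity V
      = (∏ S : {s : Finset (Fin n) // s.card = k}, packDensity (rowsSub Φ S * V)) ^ w
        * (∏ S : {s : Finset (Fin n) // s.card = k}, |(rowsSub Φ S).det|) ^ w := by
    rw [← Real.mul_rpow (Finset.prod_nonneg fun S _ => packDensity_nonneg' _)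
      (Finset.prod_nonneg fun S _ => abs_nonneg _), ← Finset.prod_mul_distrib,
      ← Finset.prod_congr rfl (fun S _ => key S), Finset.prod_mul_distrib,
      Real.mul_rpow (Finset.prod_nonneg fun S _ => hβ S)
        (Finset.prod_nonneg fun S _ => hDV), Finset.prod_const, Finset.card_univ, hcard]
    congr 1
    rw [hw, one_div, Real.pow_rpow_inv_natCast hDV hN.ne']
  rw [e1, mul_pow, div_eq_mul_inv]
  refine mul_le_mul_of_nonneg_left ?_ (sq_nonneg _)
  have hsum : ∑ S : {s : Finset (Fin n) // s.card = k}, (rowsSub Φ S).det ^ 2 = 1 := by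
    rw [cb_sum, hΦ, Matrix.det_one]
  have amgm := Real.geom_mean_le_arith_mean_weighted Finset.univ
    (fun _ : {s : Finset (Fin n) // s.card = k} => w) (fun S => (rowsSub Φ S).det ^ 2)
    (fun _ _ => hwpos.le)
    (by rw [Finset.sum_const, Finset.card_univ, hcard, nsmul_eq_mul, hw]; field_simp)
    (fun _ _ => sq_nonneg _)
  rw [← Finset.mul_sum, hsum, mul_one, Real.finsetProd_rpow _ _ (fun _ _ => sq_nonneg _)] at amgm
  have e2 : ((∏ S : {s : Finset (Fin n) // s.card = k}, |(rowsSub Φ S).det|) ^ w) ^ 2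
      = (∏ S : {s : Finset (Fin n) // s.card = k}, (rowsSub Φ S).det ^ 2) ^ w := by
    have hp : (0:ℝ) ≤ ∏ S : {s : Finset (Fin n) // s.card = k}, |(rowsSub Φ S).det| :=
      Finset.prod_nonneg fun S _ => abs_nonneg _
    rw [sq, ← Real.mul_rpow hp hp, ← Finset.prod_mul_distrib]
    simp only [abs_mul_abs_self, sq]
  rw [e2]
  refine amgm.trans ?_
  rw [hw, one_div]
end
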